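/- There exists a universal constant C > 0 such that for all integers n1, n2 > 1 with n = n1·n2, all σ > 0, and every θ* ∈ M, the isotonic least squares estimator satisfies the adaptive oracle bound R(θ*, θ̂) ≤ inf over θ ∈ M of { ||θ* − θ||² / n + C·k(θ)·σ²·(log n)⁸ / n }. -/

import Mathlib

open MeasureTheory ProbabilityTheory

noncomputable section

/-- The set of isotonic (coordinatewise nondecreasing) `n1 × n2` matrices. -/
def Isotonic {n1 n2 : ℕ} (θ : Fin n1 → Fin n2 → ℝ) : Prop :=
  ∀ ⦃i k : Fin n1⦄ ⦃j l : Fin n2⦄, i ≤ k → j ≤ l → θ i j ≤ θ k l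

/-- Squared Frobenius norm of a matrix. -/
def frobSq {n1 n2 : ℕ} (θ : Fin n1 → Fin n2 → ℝ) : ℝ :=
  ∑ i, ∑ j, θ i j ^ 2

/-- The law of an `n1 × n2` matrix with i.i.d. `N(0, σ²)` entries. -/
def noiseMeasure (n1 n2 : ℕ) (σ : ℝ) : Measure (Fin n1 → Fin n2 → ℝ) :=
  Measure.pi fun _ => Measure.pi fun _ => gaussianReal 0 ⟨σ ^ 2, sq_nonneg σ⟩

/-- `lse` is the least squares estimator: for every data matrix `y`, `lse y` minimizes
the squared Frobenius distance to `y` over the cone of isotonic matrices. -/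
def IsLSE {n1 n2 : ℕ} (lse : (Fin n1 → Fin n2 → ℝ) → Fin n1 → Fin n2 → ℝ) : Prop :=
  ∀ y, Isotonic (lse y) ∧ ∀ θ, Isotonic θ → frobSq (y - lse y) ≤ frobSq (y - θ)

/-- The risk `R(θ*, est) = E ‖est(θ* + ε) − θ*‖² / n`, where `ε` has i.i.d. `N(0,σ²)`
entries and `n = n1 n2`. -/
def risk {n1 n2 : ℕ} (σ : ℝ) (θstar : Fin n1 → Fin n2 → ℝ)
    (est : (Fin n1 → Fin n2 → ℝ) → Fin n1 → Fin n2 → ℝ) : ℝ :=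
  (∫ ε, frobSq (est (θstar + ε) - θstar) ∂noiseMeasure n1 n2 σ) / (n1 * n2)

/-- A rectangle `{(i,j) : k1 ≤ i ≤ l1, k2 ≤ j ≤ l2}` in `{1,…,n1} × {1,…,n2}`. -/
def IsRect {n1 n2 : ℕ} (A : Set (Fin n1 × Fin n2)) : Prop :=
  ∃ (k1 l1 : Fin n1) (k2 l2 : Fin n2), k1 ≤ l1 ∧ k2 ≤ l2 ∧
    A = {p | k1 ≤ p.1 ∧ p.1 ≤ l1 ∧ k2 ≤ p.2 ∧ p.2 ≤ l2}

/-- A rectangular partition: pairwise disjoint rectangles covering the whole index set. -/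
def IsRectPartition {n1 n2 : ℕ} (P : Finset (Set (Fin n1 × Fin n2))) : Prop :=
  (∀ A ∈ P, IsRect A) ∧
  (∀ A ∈ P, ∀ B ∈ P, A ≠ B → Disjoint A B) ∧
  (∀ p : Fin n1 × Fin n2, ∃ A ∈ P, p ∈ A)

/-- `θ` is constant on each member of the partition `P`. -/
def ConstOnPartition {n1 n2 : ℕ} (θ : Fin n1 → Fin n2 → ℝ)
    (P : Finset (Set (Fin n1 × Fin n2))) : Prop :=
  ∀ A ∈ P, ∀ p ∈ A, ∀ q ∈ A, θ p.1 p.2 = θ q.1 q.2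

/-- `k(θ)`: the smallest number of rectangles in a rectangular partition on which `θ`
is constant. -/
def kRect {n1 n2 : ℕ} (θ : Fin n1 → Fin n2 → ℝ) : ℕ :=
  sInf {k | ∃ P, IsRectPartition P ∧ ConstOnPartition θ P ∧ P.card = k}

theorem sum_range_mul_eq_abel (c g : ℕ → ℝ) (n : ℕ) :
    ∑ i ∈ Finset.range n, c i * g i =
      ∑ k ∈ Finset.range n, (∑ i ∈ Finset.range (k + 1), c i) * (g k - g (k + 1)) +
        (∑ i ∈ Finset.range n, c i) * g n := by
  induction n with
  | zero => simp
  | succ n ih =>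
    rw [Finset.sum_range_succ, ih, Finset.sum_range_succ _ n, Finset.sum_range_succ c n]
    ring

theorem abs_sum_range_mul_le (c g : ℕ → ℝ) (n : ℕ) (A : ℝ) (hA : 0 ≤ A) (hg : Antitone g)
    (hg0 : ∀ i, 0 ≤ g i) (hgn : g n = 0)
    (hc : ∀ k < n, g (k + 1) < g k →
      |∑ i ∈ Finset.range (k + 1), c i| ≤ A * √((k + 1 : ℕ) : ℝ)) :
    |∑ i ∈ Finset.range n, c i * g i| ≤
      A * √(∑ i ∈ Finset.range n, (((i + 1 : ℕ) : ℝ))⁻¹) *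
        √(∑ i ∈ Finset.range n, g i ^ 2) := by
  have hsq : ∑ i ∈ Finset.range n, (√((i + 1 : ℕ) : ℝ) - √(i : ℝ)) * g i =
      ∑ k ∈ Finset.range n, √((k + 1 : ℕ) : ℝ) * (g k - g (k + 1)) := by
    rw [sum_range_mul_eq_abel, hgn, mul_zero, add_zero]
    refine Finset.sum_congr rfl fun k _ => ?_
    rw [Finset.sum_range_sub (fun i : ℕ => √(i : ℝ))]
    simp
  have hd : ∀ i : ℕ, √((i + 1 : ℕ) : ℝ) - √(i : ℝ) ≤ √((((i + 1 : ℕ) : ℝ))⁻¹) := by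
    intro i
    have h1 : 0 < √((i + 1 : ℕ) : ℝ) := Real.sqrt_pos.2 (by positivity)
    rw [Real.sqrt_inv, ← one_div, le_div_iff₀ h1]
    have h2 : √(i : ℝ) ≤ √((i + 1 : ℕ) : ℝ) := Real.sqrt_le_sqrt (by simp)
    have h3 := Real.sq_sqrt (show (0 : ℝ) ≤ i by positivity)
    have h4 := Real.sq_sqrt (show (0 : ℝ) ≤ ((i + 1 : ℕ) : ℝ) by positivity)
    have h5 : ((i + 1 : ℕ) : ℝ) = i + 1 := by push_cast; ring
    nlinarith [Real.sqrt_nonneg (i : ℝ)]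
  calc |∑ i ∈ Finset.range n, c i * g i|
      ≤ ∑ k ∈ Finset.range n, A * (√((k + 1 : ℕ) : ℝ) * (g k - g (k + 1))) := by
        rw [sum_range_mul_eq_abel, hgn, mul_zero, add_zero]
        refine (Finset.abs_sum_le_sum_abs _ _).trans (Finset.sum_le_sum fun k hk => ?_)
        have hk' := hg (Nat.le_succ k)
        rcases hk'.lt_or_eq with h | h
        · rw [abs_mul, abs_of_nonneg (sub_nonneg.2 hk'), ← mul_assoc]
          exact mul_le_mul_of_nonneg_right (hc k (Finset.mem_range.1 hk) h) (sub_nonneg.2 hk')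
        · rw [Nat.succ_eq_add_one] at h
          simp [h]
    _ = A * ∑ i ∈ Finset.range n, (√((i + 1 : ℕ) : ℝ) - √(i : ℝ)) * g i := by
        rw [hsq, Finset.mul_sum]
    _ ≤ A * ∑ i ∈ Finset.range n, √((((i + 1 : ℕ) : ℝ))⁻¹) * √(g i ^ 2) := by
        refine mul_le_mul_of_nonneg_left (Finset.sum_le_sum fun i _ => ?_) hA
        rw [Real.sqrt_sq (hg0 i)]
        exact mul_le_mul_of_nonneg_right (hd i) (hg0 i)
    _ ≤ A * (√(∑ i ∈ Finset.range n, (((i + 1 : ℕ) : ℝ))⁻¹) *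
        √(∑ i ∈ Finset.range n, g i ^ 2)) := by
        refine mul_le_mul_of_nonneg_left ?_ hA
        exact Real.sum_sqrt_mul_sqrt_le _ (fun i => by positivity) (fun i => by positivity)
    _ = _ := by ring

/-- If `c` sums to at most `A √|U|` over every superlevel set `U` of `u`, then the inner product of `c`
and `u` is at most `A` times the `ℓ²` norm of `u`, up to the root of a harmonic number. -/
theorem abs_sum_mul_le_of_superlevel {ι : Type*} (S : Finset ι) (c u : ι → ℝ) (A : ℝ) (hA : 0 ≤ A)
    (hu : ∀ x ∈ S, 0 ≤ u x)
    (hc : ∀ t : ℝ, 0 < t → |∑ x ∈ S with t ≤ u x, c x| ≤ A * √((S.filter (t ≤ u ·)).card : ℝ)) :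
    |∑ x ∈ S, c x * u x| ≤
      A * √(∑ i ∈ Finset.range S.card, (((i + 1 : ℕ) : ℝ))⁻¹) * √(∑ x ∈ S, u x ^ 2) := by
  classical
  set n := S.card with hn
  let f : Fin n → ℝ := fun i => -u (S.equivFin.symm i)
  let x : Fin n → ι := fun i => S.equivFin.symm (Tuple.sort f i)
  have hxS : ∀ i, x i ∈ S := fun i => (S.equivFin.symm _).2
  have hmono : Antitone fun i => u (x i) := fun i j hij => by
    have := Tuple.monotone_sort f hij
    simp only [Function.comp, f] at this
    exact neg_le_neg_iff.1 this
  have hxinj : Function.Injective x := fun i j h =>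
    (Tuple.sort f).injective (S.equivFin.symm.injective (Subtype.ext h))
  have himage : Finset.univ.image x = S := by
    apply Finset.eq_of_subset_of_card_le
    · intro y hy
      obtain ⟨i, -, rfl⟩ := Finset.mem_image.1 hy
      exact hxS i
    · rw [Finset.card_image_of_injective _ hxinj]; simp [hn]
  have hsum : ∀ F : ι → ℝ, ∑ y ∈ S, F y = ∑ i : Fin n, F (x i) := by
    intro F
    conv_lhs => rw [← himage]
    exact Finset.sum_image fun i _ j _ h => hxinj h
  let g : ℕ → ℝ := fun i => if h : i < n then u (x ⟨i, h⟩) else 0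
  let d : ℕ → ℝ := fun i => if h : i < n then c (x ⟨i, h⟩) else 0
  have hgval : ∀ i : Fin n, g i = u (x i) := fun i => by simp [g]
  have hdval : ∀ i : Fin n, d i = c (x i) := fun i => by simp [d]
  have hg0 : ∀ i, 0 ≤ g i := fun i => by
    by_cases h : i < n
    · simpa [g, h] using hu _ (hxS _)
    · simp [g, h]
  have hganti : Antitone g := fun i j hij => by
    by_cases h : j < n
    · have h' : i < n := hij.trans_lt h
      simpa [g, h, h'] using hmono (show (⟨i, h'⟩ : Fin n) ≤ ⟨j, h⟩ from hij)
    · have : g j = 0 := by simp [g, h]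
      rw [this]; exact hg0 i
  have key := abs_sum_range_mul_le d g n A hA hganti hg0 (by simp [g]) ?_
  · rw [hsum, hsum]
    rw [Finset.sum_range, Finset.sum_range (fun i => g i ^ 2)] at key
    simpa [hgval, hdval] using key
  · intro k hk hlt
    have hpos : 0 < g k := (hg0 _).trans_lt hlt
    have hset : S.filter (g k ≤ u ·) =
        (Finset.univ.filter fun i : Fin n => (i : ℕ) < k + 1).image x := by
      rw [← himage, Finset.filter_image]
      congr 1
      ext i
      simp only [Finset.mem_filter, Finset.mem_univ, true_and, ← hgval]
      constructor
      · intro h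
        by_contra h'
        exact absurd (h.trans (hganti (not_lt.1 h'))) (not_le.2 hlt)
      · intro h
        exact hganti (Nat.lt_succ_iff.1 h)
    have hcard : (S.filter (g k ≤ u ·)).card = k + 1 := by
      rw [hset, Finset.card_image_of_injective _ hxinj, Fin.card_filter_val_lt]
      omega
    have h := hc (g k) hpos
    rw [hcard, hset, Finset.sum_image (fun i _ j _ h => hxinj h)] at h
    convert h using 2
    have hkn : k + 1 ≤ n := hk
    rw [Finset.sum_filter]
    have : ∑ i ∈ Finset.range (k + 1), d i =
        ∑ i ∈ Finset.range n, if i < k + 1 then d i else 0 := by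
      rw [← Finset.sum_filter]
      refine Finset.sum_congr ?_ fun _ _ => rfl
      ext i; simp; omega
    rw [this, Finset.sum_range]
    simp [hdval]

/-- Every rectangle sum of `e` inside the `m₁ × m₂` box is at most `G` times the square root of
the number of cells of the rectangle. -/
def HasRectBound (e : ℕ → ℕ → ℝ) (m₁ m₂ : ℕ) (G : ℝ) : Prop :=
  ∀ a b c d : ℕ, a ≤ b → b ≤ m₁ → c ≤ d → d ≤ m₂ →
    |∑ i ∈ Finset.Ico a b, ∑ j ∈ Finset.Ico c d, e i j| ≤ G * √(((b - a) * (d - c) : ℕ) : ℝ)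

theorem sqrt_add_sqrt_le (x y : ℝ) (hx : 0 ≤ x) (hy : 0 ≤ y) : √x + √y ≤ √2 * √(x + y) := by
  rw [← Real.sqrt_mul (by norm_num)]
  apply Real.le_sqrt_of_sq_le
  nlinarith [Real.sq_sqrt hx, Real.sq_sqrt hy, sq_nonneg (√x - √y)]

/-- A staircase region of `2 ^ p` rows and height `C - c` costs at most `p + 1` times as much as its
bounding rectangle: split off the largest rectangle over the first half of the rows and recurse. -/
theorem HasRectBound.abs_sum_stair_le {e : ℕ → ℕ → ℝ} {m₁ m₂ : ℕ} {G : ℝ}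
    (he : HasRectBound e m₁ m₂ G) (hG : 0 ≤ G) {h : ℕ → ℕ} (hh : Antitone h)
    (hm : ∀ i, h i ≤ m₂) (p : ℕ) : ∀ l m c C : ℕ, m ≤ 2 ^ p → l + m ≤ m₁ → c ≤ C →
      (∀ i ∈ Finset.Ico l (l + m), c ≤ h i ∧ h i ≤ C) →
      |∑ i ∈ Finset.Ico l (l + m), ∑ j ∈ Finset.Ico c (h i), e i j| ≤
        G * ((p + 1) * (√(2 ^ p) * √((C - c : ℕ) : ℝ))) := by
  induction p with
  | zero =>
    intro l m c C hmp hl hcC hi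
    obtain rfl | rfl : m = 0 ∨ m = 1 := by simp at hmp; omega
    · simp; positivity
    · have h1 := hi l (by simp)
      have := he l (l + 1) c (h l) (by omega) hl h1.1 (hm l)
      simp only [Nat.Ico_succ_singleton, Finset.sum_singleton] at this ⊢
      refine this.trans (mul_le_mul_of_nonneg_left ?_ hG)
      simp only [Nat.cast_zero, zero_add, pow_zero, Real.sqrt_one, one_mul,
        Nat.add_sub_cancel_left]
      exact Real.sqrt_le_sqrt (by exact_mod_cast (by omega : h l - c ≤ C - c))
  | succ p ih =>
    intro l m c C hmp hl hcC hi
    have hs : √((2 : ℝ) ^ (p + 1)) = √2 * √(2 ^ p) := by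
      rw [pow_succ', Real.sqrt_mul (by norm_num)]
    have hs2 : 1 ≤ √(2 : ℝ) := Real.one_le_sqrt.2 (by norm_num)
    have hx : 0 ≤ √((2 : ℝ) ^ p) := Real.sqrt_nonneg _
    have hy : 0 ≤ √((C - c : ℕ) : ℝ) := Real.sqrt_nonneg _
    by_cases hmp' : m ≤ 2 ^ p
    · refine (ih l m c C hmp' hl hcC hi).trans (mul_le_mul_of_nonneg_left ?_ hG)
      rw [hs]
      push_cast
      have : √((2 : ℝ) ^ p) ≤ √2 * √(2 ^ p) := le_mul_of_one_le_left hx hs2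
      gcongr
      linarith
    · push Not at hmp'
      obtain ⟨m', rfl⟩ := Nat.exists_eq_add_of_lt hmp'
      set r := l + 2 ^ p with hr
      have hrm : l + (2 ^ p + m' + 1) = r + (m' + 1) := by omega
      rw [hrm] at hi hl ⊢
      have hrI := hi r (by simp; omega)
      have h1 := ih l (2 ^ p) (h r) C le_rfl (by omega) hrI.2 (fun i hi' => by
        simp at hi'
        exact ⟨hh (by omega), (hi i (by simp; omega)).2⟩)
      have h2 := ih r (m' + 1) c (h r) (by rw [pow_succ] at hmp; omega) hl hrI.1 (fun i hi' => by
        simp at hi'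
        exact ⟨(hi i (by simp; omega)).1, hh (by omega)⟩)
      have h3 := he l r c (h r) (by omega) (by omega) hrI.1 (hm r)
      have hsplit : ∑ i ∈ Finset.Ico l (r + (m' + 1)), ∑ j ∈ Finset.Ico c (h i), e i j =
          ∑ i ∈ Finset.Ico l r, ∑ j ∈ Finset.Ico c (h r), e i j +
          ∑ i ∈ Finset.Ico l r, ∑ j ∈ Finset.Ico (h r) (h i), e i j +
          ∑ i ∈ Finset.Ico r (r + (m' + 1)), ∑ j ∈ Finset.Ico c (h i), e i j := by
        rw [← Finset.sum_Ico_consecutive _ (show l ≤ r by omega) (show r ≤ r + (m' + 1) by omega),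
          ← Finset.sum_add_distrib]
        congr 1
        refine Finset.sum_congr rfl fun i hi' => ?_
        simp at hi'
        exact (Finset.sum_Ico_consecutive _ hrI.1 (hh (by omega))).symm
      rw [hsplit]
      have h3' : G * √(((r - l) * (h r - c) : ℕ) : ℝ) ≤ G * (√(2 ^ p) * √((C - c : ℕ) : ℝ)) := by
        refine mul_le_mul_of_nonneg_left ?_ hG
        rw [Nat.cast_mul, Real.sqrt_mul (by positivity)]
        have : r - l = 2 ^ p := by omega
        rw [this]
        push_cast
        gcongr
        omega
      have h4 := sqrt_add_sqrt_le ((C - h r : ℕ) : ℝ) ((h r - c : ℕ) : ℝ) (by positivity)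
        (by positivity)
      have h5 : ((C - h r : ℕ) : ℝ) + ((h r - c : ℕ) : ℝ) = ((C - c : ℕ) : ℝ) := by
        rw [← Nat.cast_add]; congr 1; omega
      rw [h5] at h4
      refine (abs_add_three _ _ _).trans ?_
      have h6 : √(2 ^ p) * √((C - c : ℕ) : ℝ) + (p + 1) * (√(2 ^ p) * √((C - h r : ℕ) : ℝ)) +
          (p + 1) * (√(2 ^ p) * √((h r - c : ℕ) : ℝ)) ≤
          (((p + 1 : ℕ) : ℝ) + 1) * (√(2 ^ (p + 1)) * √((C - c : ℕ) : ℝ)) := by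
        rw [hs]
        push_cast
        have e1 : (p + 1 : ℝ) * √(2 ^ p) * (√((C - h r : ℕ) : ℝ) + √((h r - c : ℕ) : ℝ)) ≤
            (p + 1 : ℝ) * √(2 ^ p) * (√2 * √((C - c : ℕ) : ℝ)) := by gcongr
        have e2 : √(2 ^ p) * √((C - c : ℕ) : ℝ) ≤ √2 * (√(2 ^ p) * √((C - c : ℕ) : ℝ)) :=
          le_mul_of_one_le_left (by positivity) hs2
        linarith
      have h7 := mul_le_mul_of_nonneg_left h6 hG
      linarith

/-- The sum of `e` over a Young diagram is at most polylogarithmically larger than the square root of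
its size. -/
theorem HasRectBound.abs_sum_young_le {e : ℕ → ℕ → ℝ} {m₁ m₂ : ℕ} {G : ℝ}
    (he : HasRectBound e m₁ m₂ G) (hG : 0 ≤ G) {h : ℕ → ℕ} (hh : Antitone h)
    (hm : ∀ i, h i ≤ m₂) (K : ℕ) : ∀ m ≤ 2 ^ K, m ≤ m₁ →
      |∑ i ∈ Finset.range m, ∑ j ∈ Finset.range (h i), e i j| ≤
        G * (K + 1) ^ 2 * √((∑ i ∈ Finset.range m, h i : ℕ) : ℝ) := by
  have stair := he.abs_sum_stair_le hG hh hm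
  induction K with
  | zero =>
    intro m hmK hm1
    obtain rfl | rfl : m = 0 ∨ m = 1 := by simp at hmK; omega
    · simp
    · have := stair 0 0 1 0 (h 0) (by simp) (by omega) (by omega) (by simp)
      simpa using this
  | succ K ih =>
    intro m hmK hm1
    by_cases hmK' : m ≤ 2 ^ K
    · refine (ih m hmK' hm1).trans ?_
      push_cast
      gcongr
      linarith
    · push Not at hmK'
      have h1 := ih (2 ^ K) le_rfl (by omega)
      have h2 := stair K (2 ^ K) (m - 2 ^ K) 0 (h (2 ^ K)) (by rw [pow_succ] at hmK; omega)
        (by omega) (by omega) (fun i hi => by simp at hi; exact ⟨by omega, hh (by omega)⟩)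
      have hmm : 2 ^ K + (m - 2 ^ K) = m := by omega
      rw [hmm] at h2
      rw [← Finset.sum_range_add_sum_Ico _ hmK'.le]
      have hle1 : ∑ i ∈ Finset.range (2 ^ K), h i ≤ ∑ i ∈ Finset.range m, h i :=
        Finset.sum_le_sum_of_subset (Finset.range_mono hmK'.le)
      have hle2 : 2 ^ K * h (2 ^ K) ≤ ∑ i ∈ Finset.range (2 ^ K), h i := by
        have := Finset.card_nsmul_le_sum (Finset.range (2 ^ K)) h (h (2 ^ K))
          (fun i hi => hh (Finset.mem_range.1 hi).le)
        simpa using this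
      have e1 : √((∑ i ∈ Finset.range (2 ^ K), h i : ℕ) : ℝ) ≤
          √((∑ i ∈ Finset.range m, h i : ℕ) : ℝ) := Real.sqrt_le_sqrt (by exact_mod_cast hle1)
      have e2 : √((2 : ℝ) ^ K) * √((h (2 ^ K) - 0 : ℕ) : ℝ) ≤
          √((∑ i ∈ Finset.range m, h i : ℕ) : ℝ) := by
        rw [← Real.sqrt_mul (by positivity)]
        exact Real.sqrt_le_sqrt (by exact_mod_cast hle2.trans hle1)
      set s := √((∑ i ∈ Finset.range m, h i : ℕ) : ℝ)
      have hs : 0 ≤ s := Real.sqrt_nonneg _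
      simp only [← Finset.range_eq_Ico] at h2
      calc _ ≤ _ := abs_add_le _ _
        _ ≤ G * (K + 1) ^ 2 * s + G * ((K + 1) * s) := by
            refine add_le_add (h1.trans ?_) (h2.trans ?_) <;> gcongr
        _ ≤ _ := by
            push_cast
            have : 0 ≤ G * s := mul_nonneg hG hs
            nlinarith [mul_nonneg this (Nat.cast_nonneg K (α := ℝ))]

theorem HasRectBound.neg {e : ℕ → ℕ → ℝ} {m₁ m₂ : ℕ} {G : ℝ} (he : HasRectBound e m₁ m₂ G) :
    HasRectBound (fun i j => -e i j) m₁ m₂ G := by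
  intro a b c d hab hb hcd hd
  simpa [Finset.sum_neg_distrib] using he a b c d hab hb hcd hd

theorem HasRectBound.reflect {e : ℕ → ℕ → ℝ} {m₁ m₂ : ℕ} {G : ℝ}
    (he : HasRectBound e (m₁ + 1) (m₂ + 1) G) :
    HasRectBound (fun i j => e (m₁ - i) (m₂ - j)) (m₁ + 1) (m₂ + 1) G := by
  intro a b c d hab hb hcd hd
  have h := he (m₁ + 1 - b) (m₁ + 1 - a) (m₂ + 1 - d) (m₂ + 1 - c) (by omega) (by omega)
    (by omega) (by omega)
  rw [← Finset.sum_Ico_reflect _ _ hb] at h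
  simp only [← Finset.sum_Ico_reflect _ _ hd] at h
  have h1 : m₁ + 1 - a - (m₁ + 1 - b) = b - a := by omega
  have h2 : m₂ + 1 - c - (m₂ + 1 - d) = d - c := by omega
  rwa [h1, h2] at h

theorem HasRectBound.abs_sum_mul_le {e : ℕ → ℕ → ℝ} {m₁ m₂ : ℕ} {G : ℝ}
    (he : HasRectBound e m₁ m₂ G) (hG : 0 ≤ G) {u : ℕ → ℕ → ℝ}
    (hu0 : ∀ i < m₁, ∀ j < m₂, 0 ≤ u i j)
    (hu : ∀ i i' j j', i ≤ i' → j ≤ j' → i' < m₁ → j' < m₂ → u i' j' ≤ u i j)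
    {K : ℕ} (hK : m₁ ≤ 2 ^ K) :
    |∑ i ∈ Finset.range m₁, ∑ j ∈ Finset.range m₂, e i j * u i j| ≤
      G * (K + 1) ^ 2 * √(∑ i ∈ Finset.range (m₁ * m₂), (((i + 1 : ℕ) : ℝ))⁻¹) *
        √(∑ i ∈ Finset.range m₁, ∑ j ∈ Finset.range m₂, u i j ^ 2) := by
  have key := abs_sum_mul_le_of_superlevel (Finset.range m₁ ×ˢ Finset.range m₂)
    (fun x => e x.1 x.2) (fun x => u x.1 x.2) (G * (K + 1) ^ 2) (by positivity) ?_ ?_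
  · simpa only [Finset.sum_product, Finset.card_product, Finset.card_range] using key
  · intro x hx
    simp only [Finset.mem_product, Finset.mem_range] at hx
    exact hu0 _ hx.1 _ hx.2
  · intro t _
    let h : ℕ → ℕ := fun i =>
      if i < m₁ then ((Finset.range m₂).filter fun j => t ≤ u i j).card else 0
    have hrow : ∀ i < m₁, (Finset.range m₂).filter (fun j => t ≤ u i j) = Finset.range (h i) := by
      intro i hi
      have hex : ∃ N, (Finset.range m₂).filter (fun j => t ≤ u i j) = Finset.range N := by
        by_cases hall : ∀ j < m₂, t ≤ u i j
        · exact ⟨m₂, Finset.filter_true_of_mem fun j hj => hall j (Finset.mem_range.1 hj)⟩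
        · push Not at hall
          refine ⟨Nat.find hall, ?_⟩
          ext j
          simp only [Finset.mem_filter, Finset.mem_range]
          constructor
          · rintro ⟨hj, htj⟩
            by_contra hlt
            have hs := Nat.find_spec hall
            exact absurd (htj.trans (hu i i _ _ le_rfl (not_lt.1 hlt) hi hj)) (not_le.2 hs.2)
          · intro hj
            have hs := Nat.find_spec hall
            have hm := Nat.find_min hall hj
            push Not at hm
            exact ⟨hj.trans hs.1, hm (hj.trans hs.1)⟩
      obtain ⟨N, hN⟩ := hex
      simp only [h, hi, if_true, hN, Finset.card_range]
    have hanti : Antitone h := by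
      intro i i' hii
      by_cases hi' : i' < m₁
      · have hi : i < m₁ := hii.trans_lt hi'
        simp only [h, hi, hi', if_true]
        refine Finset.card_le_card fun j hj => ?_
        simp only [Finset.mem_filter, Finset.mem_range] at hj ⊢
        exact ⟨hj.1, hj.2.trans (hu _ _ _ _ hii le_rfl hi' hj.1)⟩
      · simp [h, hi']
    have hm : ∀ i, h i ≤ m₂ := by
      intro i
      by_cases hi : i < m₁
      · simp only [h, hi, if_true]
        exact (Finset.card_filter_le _ _).trans (by simp)
      · simp [h, hi]
    have hsum : ∀ {α : Type} [AddCommMonoid α] (F : ℕ → ℕ → α),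
        ∑ x ∈ Finset.range m₁ ×ˢ Finset.range m₂ with t ≤ u x.1 x.2, F x.1 x.2 =
        ∑ i ∈ Finset.range m₁, ∑ j ∈ Finset.range (h i), F i j := by
      intro α _ F
      rw [Finset.sum_filter, Finset.sum_product]
      refine Finset.sum_congr rfl fun i hi => ?_
      rw [← hrow i (Finset.mem_range.1 hi), Finset.sum_filter]
    have := he.abs_sum_young_le hG hanti hm K m₁ hK le_rfl
    rw [hsum, Finset.card_eq_sum_ones, hsum (fun _ _ => 1)]
    simpa using this

theorem HasRectBound.sum_two_mul_sub_sq_le {e : ℕ → ℕ → ℝ} {m₁ m₂ : ℕ} {G : ℝ}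
    (he : HasRectBound e (m₁ + 1) (m₂ + 1) G) (hG : 0 ≤ G) {v : ℕ → ℕ → ℝ}
    (hv : ∀ i i' j j', i ≤ i' → j ≤ j' → i' ≤ m₁ → j' ≤ m₂ → v i j ≤ v i' j')
    {K : ℕ} (hK : m₁ + 1 ≤ 2 ^ K) :
    ∑ i ∈ Finset.range (m₁ + 1), ∑ j ∈ Finset.range (m₂ + 1), (2 * (e i j * v i j) - v i j ^ 2) ≤
      2 * (G ^ 2 * (K + 1) ^ 4 *
        ∑ i ∈ Finset.range ((m₁ + 1) * (m₂ + 1)), (((i + 1 : ℕ) : ℝ))⁻¹) := by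
  set H := ∑ i ∈ Finset.range ((m₁ + 1) * (m₂ + 1)), (((i + 1 : ℕ) : ℝ))⁻¹ with hH
  have hH0 : 0 ≤ H := Finset.sum_nonneg fun i _ => by positivity
  have half : ∀ (f u : ℕ → ℕ → ℝ), HasRectBound f (m₁ + 1) (m₂ + 1) G →
      (∀ i < m₁ + 1, ∀ j < m₂ + 1, 0 ≤ u i j) →
      (∀ i i' j j', i ≤ i' → j ≤ j' → i' < m₁ + 1 → j' < m₂ + 1 → u i' j' ≤ u i j) →
      ∑ i ∈ Finset.range (m₁ + 1), ∑ j ∈ Finset.range (m₂ + 1),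
        (2 * (f i j * u i j) - u i j ^ 2) ≤ G ^ 2 * (K + 1) ^ 4 * H := by
    intro f u hf hu0 hu
    have h := (le_abs_self _).trans (hf.abs_sum_mul_le hG hu0 hu hK)
    set Q := ∑ i ∈ Finset.range (m₁ + 1), ∑ j ∈ Finset.range (m₂ + 1), u i j ^ 2 with hQ
    have hQ0 : 0 ≤ Q := Finset.sum_nonneg fun i _ => Finset.sum_nonneg fun j _ => by positivity
    simp only [Finset.sum_sub_distrib, ← Finset.mul_sum, ← hQ]
    have h1 : (G * (K + 1) ^ 2 * √H) ^ 2 = G ^ 2 * (K + 1) ^ 4 * H := by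
      rw [mul_pow, Real.sq_sqrt hH0]; ring
    nlinarith [Real.sq_sqrt hQ0, sq_nonneg (G * (K + 1) ^ 2 * √H - √Q)]
  have hpos := half (fun i j => e (m₁ - i) (m₂ - j)) (fun i j => max (v (m₁ - i) (m₂ - j)) 0)
    he.reflect (fun _ _ _ _ => le_max_right _ _) (fun i i' j j' hi hj hi' hj' =>
      max_le_max (hv _ _ _ _ (by omega) (by omega) (by omega) (by omega)) le_rfl)
  have hneg := half (fun i j => -e i j) (fun i j => max (-v i j) 0)
    he.neg (fun _ _ _ _ => le_max_right _ _) (fun i i' j j' hi hj hi' hj' =>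
      max_le_max (neg_le_neg (hv _ _ _ _ hi hj (by omega) (by omega))) le_rfl)
  have hrefl : ∑ i ∈ Finset.range (m₁ + 1), ∑ j ∈ Finset.range (m₂ + 1),
      (2 * (e (m₁ - i) (m₂ - j) * max (v (m₁ - i) (m₂ - j)) 0) -
        max (v (m₁ - i) (m₂ - j)) 0 ^ 2) =
      ∑ i ∈ Finset.range (m₁ + 1), ∑ j ∈ Finset.range (m₂ + 1),
        (2 * (e i j * max (v i j) 0) - max (v i j) 0 ^ 2) := by
    rw [← Finset.sum_range_reflect (fun i => ∑ j ∈ Finset.range (m₂ + 1),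
        (2 * (e i j * max (v i j) 0) - max (v i j) 0 ^ 2))]
    refine Finset.sum_congr rfl fun i _ => ?_
    rw [← Finset.sum_range_reflect (fun j => 2 * (e (m₁ + 1 - 1 - i) j *
        max (v (m₁ + 1 - 1 - i) j) 0) - max (v (m₁ + 1 - 1 - i) j) 0 ^ 2)]
    simp only [Nat.add_sub_cancel]
  rw [hrefl] at hpos
  calc _ = ∑ i ∈ Finset.range (m₁ + 1), ∑ j ∈ Finset.range (m₂ + 1),
        (2 * (e i j * max (v i j) 0) - max (v i j) 0 ^ 2) +
      ∑ i ∈ Finset.range (m₁ + 1), ∑ j ∈ Finset.range (m₂ + 1),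
        (2 * (-e i j * max (-v i j) 0) - max (-v i j) 0 ^ 2) := by
        simp only [← Finset.sum_add_distrib]
        refine Finset.sum_congr rfl fun i _ => Finset.sum_congr rfl fun j _ => ?_
        rcases le_total 0 (v i j) with h | h
        · rw [max_eq_left h, max_eq_right (by linarith)]; ring
        · rw [max_eq_right h, max_eq_left (by linarith)]; ring
    _ ≤ _ := by linarith

/-- Extension by zero of a matrix to all pairs of natural numbers. -/
def natExt {n1 n2 : ℕ} (f : Fin n1 → Fin n2 → ℝ) (i j : ℕ) : ℝ :=
  if h : i < n1 ∧ j < n2 then f ⟨i, h.1⟩ ⟨j, h.2⟩ else 0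

theorem natExt_val {n1 n2 : ℕ} (f : Fin n1 → Fin n2 → ℝ) (i : Fin n1) (j : Fin n2) :
    natExt f i j = f i j := by
  simp [natExt]

theorem sum_rect_eq_sum_Ico {n1 n2 : ℕ} (f : Fin n1 → Fin n2 → ℝ) (F : ℕ → ℕ → ℝ)
    (hF : ∀ i j, F (i : Fin n1) (j : Fin n2) = f i j) {a b c d : ℕ} (hb : b ≤ n1) (hd : d ≤ n2) :
    ∑ i : Fin n1, ∑ j : Fin n2, (if (a ≤ (i : ℕ) ∧ (i : ℕ) < b) ∧
        c ≤ (j : ℕ) ∧ (j : ℕ) < d then f i j else 0) =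
      ∑ i ∈ Finset.Ico a b, ∑ j ∈ Finset.Ico c d, F i j := by
  have h : ∀ (p q n : ℕ) (g : ℕ → ℝ), q ≤ n → ∑ i ∈ Finset.Ico p q, g i =
      ∑ i : Fin n, if p ≤ (i : ℕ) ∧ (i : ℕ) < q then g i else 0 := by
    intro p q n g hq
    rw [← Finset.sum_range (fun i => if p ≤ i ∧ i < q then g i else 0), ← Finset.sum_filter]
    refine Finset.sum_congr ?_ fun _ _ => rfl
    ext i
    simp only [Finset.mem_Ico, Finset.mem_filter, Finset.mem_range]
    omega
  rw [h a b n1 _ hb]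
  refine Finset.sum_congr rfl fun i _ => ?_
  by_cases hi : a ≤ (i : ℕ) ∧ (i : ℕ) < b
  · simp only [hi, true_and, if_true, h c d n2 _ hd, hF, and_self]
  · simp [hi]

theorem HasRectBound.shift {e : ℕ → ℕ → ℝ} {n₁ n₂ m₁ m₂ k₁ k₂ : ℕ} {G : ℝ}
    (he : HasRectBound e n₁ n₂ G) (h₁ : k₁ + m₁ ≤ n₁) (h₂ : k₂ + m₂ ≤ n₂) :
    HasRectBound (fun i j => e (k₁ + i) (k₂ + j)) m₁ m₂ G := by
  intro a b c d hab hb hcd hd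
  have h := he (k₁ + a) (k₁ + b) (k₂ + c) (k₂ + d) (by omega) (by omega) (by omega) (by omega)
  rw [Nat.add_sub_add_left, Nat.add_sub_add_left, add_comm k₁ a, add_comm k₁ b,
    add_comm k₂ c, add_comm k₂ d, ← Finset.sum_Ico_add'] at h
  simp only [← Finset.sum_Ico_add'] at h
  simpa only [add_comm] using h

theorem sum_rect_two_mul_sub_sq_le {n1 n2 : ℕ} {ε v : Fin n1 → Fin n2 → ℝ} {G : ℝ}
    (he : HasRectBound (natExt ε) n1 n2 G) (hG : 0 ≤ G) {K : ℕ} (hK : n1 ≤ 2 ^ K)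
    {k1 l1 : Fin n1} {k2 l2 : Fin n2} (h1 : k1 ≤ l1) (h2 : k2 ≤ l2)
    (hv : ∀ i i' j j', k1 ≤ i → i ≤ i' → i' ≤ l1 → k2 ≤ j → j ≤ j' → j' ≤ l2 → v i j ≤ v i' j') :
    ∑ i, ∑ j, (if (k1 ≤ i ∧ i ≤ l1) ∧ k2 ≤ j ∧ j ≤ l2 then
        2 * (ε i j * v i j) - v i j ^ 2 else 0) ≤
      2 * (G ^ 2 * (K + 1) ^ 4 * ∑ i ∈ Finset.range (n1 * n2), (((i + 1 : ℕ) : ℝ))⁻¹) := by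
  obtain ⟨k1, hk1⟩ := k1
  obtain ⟨l1, hl1⟩ := l1
  obtain ⟨k2, hk2⟩ := k2
  obtain ⟨l2, hl2⟩ := l2
  obtain ⟨m1, rfl⟩ := Nat.exists_eq_add_of_le (Fin.mk_le_mk.1 h1)
  obtain ⟨m2, rfl⟩ := Nat.exists_eq_add_of_le (Fin.mk_le_mk.1 h2)
  have hsum := sum_rect_eq_sum_Ico (fun i j => 2 * (ε i j * v i j) - v i j ^ 2)
    (fun i j => 2 * (natExt ε i j * natExt v i j) - natExt v i j ^ 2)
    (fun i j => by simp only [natExt_val]) (a := k1) (b := k1 + m1 + 1) (c := k2)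
    (d := k2 + m2 + 1) hl1 hl2
  simp only [Fin.le_def, Nat.lt_succ_iff] at hsum ⊢
  rw [hsum, Finset.sum_Ico_eq_sum_range]
  simp only [Finset.sum_Ico_eq_sum_range]
  have e1 : k1 + m1 + 1 - k1 = m1 + 1 := by omega
  have e2 : k2 + m2 + 1 - k2 = m2 + 1 := by omega
  rw [e1, e2]
  have he' := he.shift (m₁ := m1 + 1) (m₂ := m2 + 1) (k₁ := k1) (k₂ := k2) hl1 hl2
  refine (he'.sum_two_mul_sub_sq_le hG (v := fun i j => natExt v (k1 + i) (k2 + j)) (K := K)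
    ?_ (by omega)).trans ?_
  · intro i i' j j' hi hj hi' hj'
    have a1 : k1 + i < n1 ∧ k2 + j < n2 := by omega
    have a2 : k1 + i' < n1 ∧ k2 + j' < n2 := by omega
    simp only [natExt, a1, a2, and_self, dite_true]
    apply hv <;> simp [Fin.le_def] <;> omega
  · gcongr <;> omega

theorem IsLSE.frobSq_sub_le {n1 n2 : ℕ} {lse : (Fin n1 → Fin n2 → ℝ) → Fin n1 → Fin n2 → ℝ}
    (hlse : IsLSE lse) (θstar ε : Fin n1 → Fin n2 → ℝ) {θ : Fin n1 → Fin n2 → ℝ}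
    (hθ : Isotonic θ) :
    frobSq (lse (θstar + ε) - θstar) ≤ frobSq (θstar - θ) +
      ∑ i, ∑ j, (2 * (ε i j * (lse (θstar + ε) - θ) i j) - (lse (θstar + ε) - θ) i j ^ 2) := by
  obtain ⟨hiso, hmin⟩ := hlse (θstar + ε)
  set w := lse (θstar + ε) with hw
  set I : ℝ := ∑ i, ∑ j, (θstar i j + ε i j - w i j) * (w i j - θ i j) with hI
  set Q : ℝ := frobSq (w - θ) with hQ
  have hQ0 : 0 ≤ Q := Finset.sum_nonneg fun i _ => Finset.sum_nonneg fun j _ => sq_nonneg _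
  have hstep : ∀ s : ℝ, 0 ≤ s → s ≤ 1 → 0 ≤ 2 * s * I + s ^ 2 * Q := by
    intro s hs0 hs1
    have h := hmin (fun i j => w i j - s * (w i j - θ i j)) (fun i k j l hik hjl => by
      have a1 := hiso hik hjl
      have a2 := hθ hik hjl
      nlinarith [mul_nonneg hs0 (sub_nonneg.2 a2),
        mul_nonneg (sub_nonneg.2 hs1) (sub_nonneg.2 a1)])
    have hexp : frobSq (θstar + ε - fun i j => w i j - s * (w i j - θ i j)) =
        frobSq (θstar + ε - w) + (2 * s * I + s ^ 2 * Q) := by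
      simp only [hI, hQ, frobSq, Finset.mul_sum, ← Finset.sum_add_distrib, Pi.sub_apply,
        Pi.add_apply]
      refine Finset.sum_congr rfl fun i _ => Finset.sum_congr rfl fun j _ => ?_
      ring
    rw [hexp] at h
    linarith
  have hI0 : 0 ≤ I := by
    by_contra hneg
    push Not at hneg
    have hpos : 0 < Q - I := by linarith
    have h := hstep (-I / (Q - I)) (div_nonneg (by linarith) hpos.le)
      ((div_le_one hpos).2 (by linarith))
    have e : 2 * (-I / (Q - I)) * I + (-I / (Q - I)) ^ 2 * Q =
        I ^ 2 * (2 * I - Q) / (Q - I) ^ 2 := by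
      field_simp
      ring
    rw [e] at h
    have : I ^ 2 * (2 * I - Q) / (Q - I) ^ 2 < 0 :=
      div_neg_of_neg_of_pos (mul_neg_of_pos_of_neg (by nlinarith) (by linarith)) (by positivity)
    linarith
  have hfin : frobSq (w - θstar) + 2 * I = frobSq (θstar - θ) +
      ∑ i, ∑ j, (2 * (ε i j * (w - θ) i j) - (w - θ) i j ^ 2) := by
    simp only [hI, frobSq, Finset.mul_sum, ← Finset.sum_add_distrib, Pi.sub_apply]
    refine Finset.sum_congr rfl fun i _ => Finset.sum_congr rfl fun j _ => ?_
    ring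
  linarith

theorem IsRectPartition.sum_eq {n1 n2 : ℕ} {P : Finset (Set (Fin n1 × Fin n2))}
    (hP : IsRectPartition P) (f : Fin n1 → Fin n2 → ℝ) :
    ∑ i, ∑ j, f i j = ∑ A ∈ P, ∑ i, ∑ j, A.indicator (fun p => f p.1 p.2) (i, j) := by
  rw [Finset.sum_comm (s := P) (t := Finset.univ)]
  refine Finset.sum_congr rfl fun i _ => ?_
  rw [Finset.sum_comm (s := P) (t := Finset.univ)]
  refine Finset.sum_congr rfl fun j _ => ?_
  obtain ⟨A, hA, hpA⟩ := hP.2.2 (i, j)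
  rw [Finset.sum_eq_single_of_mem A hA, Set.indicator_of_mem hpA]
  intro B hB hBA
  exact Set.indicator_of_notMem (fun h => (hP.2.1 B hB A hA hBA).le_bot ⟨h, hpA⟩) _

theorem IsLSE.frobSq_sub_le_of_hasRectBound {n1 n2 : ℕ}
    {lse : (Fin n1 → Fin n2 → ℝ) → Fin n1 → Fin n2 → ℝ}
    (hlse : IsLSE lse) (θstar : Fin n1 → Fin n2 → ℝ) {ε θ : Fin n1 → Fin n2 → ℝ}
    (hθ : Isotonic θ) {P : Finset (Set (Fin n1 × Fin n2))} (hP : IsRectPartition P)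
    (hθP : ConstOnPartition θ P) {G : ℝ} (he : HasRectBound (natExt ε) n1 n2 G) (hG : 0 ≤ G)
    {K : ℕ} (hK : n1 ≤ 2 ^ K) :
    frobSq (lse (θstar + ε) - θstar) ≤ frobSq (θstar - θ) + P.card *
      (2 * (G ^ 2 * (K + 1) ^ 4 * ∑ i ∈ Finset.range (n1 * n2), (((i + 1 : ℕ) : ℝ))⁻¹)) := by
  refine (hlse.frobSq_sub_le θstar ε hθ).trans (add_le_add_right ?_ _)
  rw [hP.sum_eq, ← nsmul_eq_mul]
  refine Finset.sum_le_card_nsmul _ _ _ fun A hA => ?_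
  obtain ⟨k1, l1, k2, l2, h1, h2, hAeq⟩ := hP.1 A hA
  refine le_trans (le_of_eq ?_) (sum_rect_two_mul_sub_sq_le he hG hK h1 h2
    (v := lse (θstar + ε) - θ) ?_)
  · refine Finset.sum_congr rfl fun i _ => Finset.sum_congr rfl fun j _ => ?_
    simp only [hAeq, Set.indicator_apply, Set.mem_ofPred_eq, and_assoc]
  · intro i i' j j' hki hii hil hkj hjj hjl
    have hc : θ i j = θ i' j' := hθP A hA (i, j)
      (hAeq ▸ ⟨hki, hii.trans hil, hkj, hjj.trans hjl⟩) (i', j')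
      (hAeq ▸ ⟨hki.trans hii, hil, hkj.trans hjj, hjl⟩)
    have := (hlse (θstar + ε)).1 hii hjj
    simp only [Pi.sub_apply]
    linarith

theorem exists_isRectPartition_card_eq_kRect {n1 n2 : ℕ} (θ : Fin n1 → Fin n2 → ℝ) :
    ∃ P, IsRectPartition P ∧ ConstOnPartition θ P ∧ P.card = kRect θ := by
  classical
  refine Nat.sInf_mem (s := {k | ∃ P, IsRectPartition P ∧ ConstOnPartition θ P ∧ P.card = k})
    ⟨_, Finset.univ.image fun p : Fin n1 × Fin n2 => ({p} : Set _), ⟨?_, ?_, ?_⟩, ?_, rfl⟩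
  · intro A hA
    obtain ⟨p, -, rfl⟩ := Finset.mem_image.1 hA
    refine ⟨p.1, p.1, p.2, p.2, le_rfl, le_rfl, ?_⟩
    ext q
    simp only [Set.mem_singleton_iff, Set.mem_ofPred_eq, Prod.ext_iff]
    constructor
    · rintro ⟨h1, h2⟩
      simp [h1, h2]
    · rintro ⟨h1, h2, h3, h4⟩
      exact ⟨le_antisymm h2 h1, le_antisymm h4 h3⟩
  · intro A hA B hB hAB
    obtain ⟨p, -, rfl⟩ := Finset.mem_image.1 hA
    obtain ⟨q, -, rfl⟩ := Finset.mem_image.1 hB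
    exact Set.disjoint_singleton.2 fun h => hAB (by rw [h])
  · intro p
    exact ⟨{p}, Finset.mem_image_of_mem _ (Finset.mem_univ p), rfl⟩
  · intro A hA p hp q hq
    obtain ⟨r, -, rfl⟩ := Finset.mem_image.1 hA
    rw [Set.mem_singleton_iff.1 hp, Set.mem_singleton_iff.1 hq]

theorem noiseMeasure_eq_pi_toNNReal (n1 n2 : ℕ) (σ : ℝ) : noiseMeasure n1 n2 σ =
    Measure.pi fun _ => Measure.pi fun _ => gaussianReal 0 (σ ^ 2).toNNReal := by
  have h : (σ ^ 2).toNNReal = ⟨σ ^ 2, sq_nonneg σ⟩ :=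
    NNReal.eq (Real.coe_toNNReal _ (sq_nonneg σ))
  rw [h]
  rfl

instance isProbabilityMeasure_noiseMeasure (n1 n2 : ℕ) (σ : ℝ) :
    IsProbabilityMeasure (noiseMeasure n1 n2 σ) := by
  rw [noiseMeasure_eq_pi_toNNReal]
  infer_instance

theorem exp_sum_mul_eq_prod {n1 n2 : ℕ} (w ε : Fin n1 → Fin n2 → ℝ) :
    Real.exp (∑ i, ∑ j, w i j * ε i j) = ∏ i, ∏ j, Real.exp (w i j * ε i j) := by
  simp only [Real.exp_sum]

theorem integrable_exp_noise {n1 n2 : ℕ} (σ : ℝ) (w : Fin n1 → Fin n2 → ℝ) :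
    Integrable (fun ε => Real.exp (∑ i, ∑ j, w i j * ε i j)) (noiseMeasure n1 n2 σ) := by
  simp only [exp_sum_mul_eq_prod, noiseMeasure_eq_pi_toNNReal]
  exact Integrable.fintype_prod (f := fun i (x : Fin n2 → ℝ) => ∏ j, Real.exp (w i j * x j))
    fun i => Integrable.fintype_prod (f := fun j (x : ℝ) => Real.exp (w i j * x))
      fun j => integrable_exp_mul_gaussianReal _

theorem integral_exp_noise {n1 n2 : ℕ} (σ : ℝ) (w : Fin n1 → Fin n2 → ℝ) :
    ∫ ε, Real.exp (∑ i, ∑ j, w i j * ε i j) ∂noiseMeasure n1 n2 σ =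
      Real.exp (∑ i, ∑ j, σ ^ 2 * w i j ^ 2 / 2) := by
  simp only [exp_sum_mul_eq_prod, noiseMeasure_eq_pi_toNNReal]
  rw [integral_fintype_prod_eq_prod (fun i (x : Fin n2 → ℝ) => ∏ j, Real.exp (w i j * x j))]
  simp only [Real.exp_sum]
  refine Finset.prod_congr rfl fun i _ => ?_
  rw [integral_fintype_prod_eq_prod (fun j (x : ℝ) => Real.exp (w i j * x))]
  refine Finset.prod_congr rfl fun j _ => ?_
  have h := congrFun (mgf_id_gaussianReal (μ := 0) (v := (σ ^ 2).toNNReal)) (w i j)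
  simp only [mgf, id] at h
  rw [h, Real.coe_toNNReal _ (sq_nonneg σ), zero_mul, zero_add]

theorem sq_le_of_exp_abs_le {x N S : ℝ} (hN : 1 ≤ N) (hS : Real.exp |x| ≤ S) :
    x ^ 2 ≤ 2 * Real.log N ^ 2 + 4 / N * S := by
  have hN0 : 0 < N := by linarith
  have ht : 0 ≤ Real.log N := Real.log_nonneg hN
  have hS0 : 0 ≤ 4 / N * S := mul_nonneg (by positivity) ((Real.exp_pos _).le.trans hS)
  rw [← sq_abs]
  rcases le_total |x| (Real.log N) with h | h
  · nlinarith [abs_nonneg x]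
  · have h1 := Real.quadratic_le_exp_of_nonneg (sub_nonneg.2 h)
    rw [Real.exp_sub, Real.exp_log hN0] at h1
    have h2 : Real.exp |x| / N ≤ S / N := div_le_div_of_nonneg_right hS hN0.le
    have h3 : 4 / N * S = 4 * (S / N) := by ring
    rw [h3]
    nlinarith [sq_nonneg (|x| - 2 * Real.log N)]

/-- The endpoints of all (possibly empty) half-open rectangles in the `n1 × n2` grid. -/
def rectIndex (n1 n2 : ℕ) : Finset ((ℕ × ℕ) × ℕ × ℕ) :=
  (Finset.range (n1 + 1) ×ˢ Finset.range (n1 + 1)) ×ˢ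
    (Finset.range (n2 + 1) ×ˢ Finset.range (n2 + 1))

/-- The normalized indicator of the half-open rectangle with endpoints `r`. -/
def rectWeight (n1 n2 : ℕ) (σ : ℝ) (r : (ℕ × ℕ) × ℕ × ℕ) (i : Fin n1) (j : Fin n2) : ℝ :=
  if (r.1.1 ≤ (i : ℕ) ∧ (i : ℕ) < r.1.2) ∧ r.2.1 ≤ (j : ℕ) ∧ (j : ℕ) < r.2.2 then
    (σ * √(((r.1.2 - r.1.1) * (r.2.2 - r.2.1) : ℕ) : ℝ))⁻¹ else 0

/-- An integrable upper bound for the squared supremum of the noise over normalized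
rectangles. -/
def noiseBound {n1 n2 : ℕ} (σ : ℝ) (ε : Fin n1 → Fin n2 → ℝ) : ℝ :=
  σ ^ 2 * (2 * Real.log (rectIndex n1 n2).card ^ 2 + 4 / (rectIndex n1 n2).card *
    ∑ r ∈ rectIndex n1 n2, (Real.exp (∑ i, ∑ j, rectWeight n1 n2 σ r i j * ε i j) +
      Real.exp (∑ i, ∑ j, -rectWeight n1 n2 σ r i j * ε i j)))

theorem noiseBound_nonneg {n1 n2 : ℕ} (σ : ℝ) (ε : Fin n1 → Fin n2 → ℝ) :
    0 ≤ noiseBound σ ε := by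
  unfold noiseBound
  have : 0 ≤ ∑ r ∈ rectIndex n1 n2, (Real.exp (∑ i, ∑ j, rectWeight n1 n2 σ r i j * ε i j) +
      Real.exp (∑ i, ∑ j, -rectWeight n1 n2 σ r i j * ε i j)) :=
    Finset.sum_nonneg fun r _ => by positivity
  positivity

theorem one_le_card_rectIndex (n1 n2 : ℕ) : (1 : ℝ) ≤ (rectIndex n1 n2).card := by
  have : 0 < (rectIndex n1 n2).card := Finset.card_pos.2 ⟨((0, 0), (0, 0)), by simp [rectIndex]⟩
  exact_mod_cast this

theorem hasRectBound_natExt {n1 n2 : ℕ} {σ : ℝ} (hσ : 0 < σ) (ε : Fin n1 → Fin n2 → ℝ) :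
    HasRectBound (natExt ε) n1 n2 √(noiseBound σ ε) := by
  intro a b c d hab hb hcd hd
  rw [← sum_rect_eq_sum_Ico ε (natExt ε) (natExt_val ε) hb hd]
  set q := (b - a) * (d - c) with hq
  rcases Nat.eq_zero_or_pos q with h0 | hpos
  · rw [h0]
    have : ∀ (i : Fin n1) (j : Fin n2),
        ¬((a ≤ (i : ℕ) ∧ (i : ℕ) < b) ∧ c ≤ (j : ℕ) ∧ (j : ℕ) < d) := by
      rintro i j ⟨⟨h1, h2⟩, h3, h4⟩
      rcases Nat.mul_eq_zero.1 (hq ▸ h0) with h | h <;> omega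
    simp [this]
  · have hqs : 0 < √(q : ℝ) := Real.sqrt_pos.2 (by exact_mod_cast hpos)
    set r : (ℕ × ℕ) × ℕ × ℕ := ((a, b), (c, d)) with hr
    have hmem : r ∈ rectIndex n1 n2 := by
      simp only [hr, rectIndex, Finset.mem_product, Finset.mem_range]
      omega
    set x := ∑ i, ∑ j, rectWeight n1 n2 σ r i j * ε i j with hx
    have hxeq : ∑ i : Fin n1, ∑ j : Fin n2, (if (a ≤ (i : ℕ) ∧ (i : ℕ) < b) ∧
        c ≤ (j : ℕ) ∧ (j : ℕ) < d then ε i j else 0) = σ * √(q : ℝ) * x := by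
      simp only [hx, Finset.mul_sum]
      refine Finset.sum_congr rfl fun i _ => Finset.sum_congr rfl fun j _ => ?_
      simp only [rectWeight, hr, ← hq]
      split_ifs
      · field_simp
      · simp
    have hneg : ∑ i, ∑ j, -rectWeight n1 n2 σ r i j * ε i j = -x := by
      simp only [hx, neg_mul, Finset.sum_neg_distrib]
    have hle : Real.exp |x| ≤ ∑ r ∈ rectIndex n1 n2,
        (Real.exp (∑ i, ∑ j, rectWeight n1 n2 σ r i j * ε i j) +
          Real.exp (∑ i, ∑ j, -rectWeight n1 n2 σ r i j * ε i j)) := by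
      refine le_trans ?_ (Finset.single_le_sum (fun r _ => by positivity) hmem)
      rw [hneg, ← hx]
      rcases abs_cases x with ⟨h, -⟩ | ⟨h, -⟩ <;> rw [h]
      · linarith [Real.exp_pos (-x)]
      · linarith [Real.exp_pos x]
    have hsq := sq_le_of_exp_abs_le (one_le_card_rectIndex n1 n2) hle
    rw [hxeq, abs_mul, abs_mul, abs_of_pos hσ, abs_of_pos hqs]
    have : σ * |x| ≤ √(noiseBound σ ε) := by
      apply Real.le_sqrt_of_sq_le
      rw [mul_pow, sq_abs]
      exact mul_le_mul_of_nonneg_left hsq (sq_nonneg σ)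
    nlinarith

theorem sum_sq_rectWeight_le {n1 n2 : ℕ} {σ : ℝ} (hσ : 0 < σ) {r : (ℕ × ℕ) × ℕ × ℕ}
    (hr : r ∈ rectIndex n1 n2) :
    ∑ i, ∑ j, σ ^ 2 * rectWeight n1 n2 σ r i j ^ 2 / 2 ≤ 1 / 2 := by
  obtain ⟨⟨a, b⟩, c, d⟩ := r
  simp only [rectIndex, Finset.mem_product, Finset.mem_range] at hr
  set q := (b - a) * (d - c) with hq
  have h := sum_rect_eq_sum_Ico (n1 := n1) (n2 := n2) (a := a) (b := b) (c := c) (d := d)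
    (fun _ _ => σ ^ 2 * ((σ * √(q : ℝ))⁻¹) ^ 2 / 2) (fun _ _ => σ ^ 2 * ((σ * √(q : ℝ))⁻¹) ^ 2 / 2)
    (fun _ _ => rfl) (by omega) (by omega)
  have e : ∑ i, ∑ j, σ ^ 2 * rectWeight n1 n2 σ ((a, b), c, d) i j ^ 2 / 2 =
      ∑ i ∈ Finset.Ico a b, ∑ j ∈ Finset.Ico c d, σ ^ 2 * ((σ * √(q : ℝ))⁻¹) ^ 2 / 2 := by
    rw [← h]
    refine Finset.sum_congr rfl fun i _ => Finset.sum_congr rfl fun j _ => ?_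
    simp only [rectWeight, ← hq]
    split_ifs <;> simp
  rw [e]
  simp only [Finset.sum_const, Nat.card_Ico, nsmul_eq_mul]
  rw [← mul_assoc, ← Nat.cast_mul, ← hq]
  rw [inv_pow, mul_pow, Real.sq_sqrt (by positivity)]
  rcases Nat.eq_zero_or_pos q with h0 | hpos
  · simp [h0]
  · have : (q : ℝ) ≠ 0 := by exact_mod_cast hpos.ne'
    apply le_of_eq
    field_simp

theorem integrable_noiseBound {n1 n2 : ℕ} (σ : ℝ) :
    Integrable (noiseBound (n1 := n1) (n2 := n2) σ) (noiseMeasure n1 n2 σ) := by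
  unfold noiseBound
  refine Integrable.const_mul ((integrable_const _).add (Integrable.const_mul ?_ _)) _
  exact integrable_finsetSum _ fun r _ => (integrable_exp_noise σ _).add
    (integrable_exp_noise σ fun i j => -rectWeight n1 n2 σ r i j)

theorem integral_noiseBound_le {n1 n2 : ℕ} {σ : ℝ} (hσ : 0 < σ) :
    ∫ ε, noiseBound (n1 := n1) (n2 := n2) σ ε ∂noiseMeasure n1 n2 σ ≤
      σ ^ 2 * (2 * Real.log (rectIndex n1 n2).card ^ 2 + 16) := by
  have hi : ∀ r, Integrable (fun ε : Fin n1 → Fin n2 → ℝ =>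
      Real.exp (∑ i, ∑ j, rectWeight n1 n2 σ r i j * ε i j) +
        Real.exp (∑ i, ∑ j, -rectWeight n1 n2 σ r i j * ε i j)) (noiseMeasure n1 n2 σ) :=
    fun r => (integrable_exp_noise σ _).add
      (integrable_exp_noise σ fun i j => -rectWeight n1 n2 σ r i j)
  have hexp : Real.exp (1 / 2) ≤ 2 := by
    have h1 : Real.exp (1 / 2) ^ 2 = Real.exp 1 := by
      rw [← Real.exp_nat_mul]; norm_num
    nlinarith [Real.exp_one_lt_d9, Real.exp_pos (1 / 2)]
  have hN := one_le_card_rectIndex n1 n2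
  have hr : ∀ r ∈ rectIndex n1 n2, ∫ ε : Fin n1 → Fin n2 → ℝ,
      (Real.exp (∑ i, ∑ j, rectWeight n1 n2 σ r i j * ε i j) +
        Real.exp (∑ i, ∑ j, -rectWeight n1 n2 σ r i j * ε i j)) ∂noiseMeasure n1 n2 σ ≤ 4 := by
    intro r hr
    rw [integral_add (integrable_exp_noise σ _)
      (integrable_exp_noise σ fun i j => -rectWeight n1 n2 σ r i j), integral_exp_noise,
      integral_exp_noise σ fun i j => -rectWeight n1 n2 σ r i j]
    simp only [neg_sq]
    have := (Real.exp_le_exp.2 (sum_sq_rectWeight_le hσ hr)).trans hexp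
    linarith
  unfold noiseBound
  rw [integral_const_mul, integral_add (integrable_const _)
    ((integrable_finsetSum _ fun r _ => hi r).const_mul _), integral_const_mul,
    integral_const_mul, integral_finsetSum _ fun r _ => hi r]
  refine mul_le_mul_of_nonneg_left ?_ (sq_nonneg σ)
  have hs := Finset.sum_le_card_nsmul _ _ _ hr
  rw [nsmul_eq_mul] at hs
  have h2 := mul_le_mul_of_nonneg_left hs
    (show (0 : ℝ) ≤ 4 / (rectIndex n1 n2).card by positivity)
  have h3 : (4 : ℝ) / (rectIndex n1 n2).card * ((rectIndex n1 n2).card * 4) = 16 := by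
    field_simp
    norm_num
  rw [h3] at h2
  simp only [integral_const, probReal_univ, one_smul]
  linarith

theorem log_card_rectIndex_le {n1 n2 : ℕ} (h1 : 1 < n1) (h2 : 1 < n2) :
    Real.log (rectIndex n1 n2).card ≤ 4 * Real.log (n1 * n2) := by
  have hle : (rectIndex n1 n2).card ≤ (n1 * n2) ^ 4 := by
    simp only [rectIndex, Finset.card_product, Finset.card_range]
    have a1 : n1 + 1 ≤ n1 ^ 2 := by nlinarith
    have a2 : n2 + 1 ≤ n2 ^ 2 := by nlinarith
    calc _ ≤ (n1 ^ 2 * n1 ^ 2) * (n2 ^ 2 * n2 ^ 2) := by gcongr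
      _ = _ := by ring
  have h := Real.log_le_log (by linarith [one_le_card_rectIndex n1 n2])
    (show ((rectIndex n1 n2).card : ℝ) ≤ ((n1 : ℝ) * n2) ^ 4 by exact_mod_cast hle)
  rwa [Real.log_pow] at h

theorem four_le_mul {n1 n2 : ℕ} (h1 : 1 < n1) (h2 : 1 < n2) : 4 ≤ n1 * n2 :=
  Nat.mul_le_mul h1 h2

theorem one_le_log_of_four_le {n : ℕ} (hn : 4 ≤ n) : 1 ≤ Real.log n := by
  rw [Real.le_log_iff_exp_le (by positivity)]
  have : (4 : ℝ) ≤ n := by exact_mod_cast hn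
  linarith [Real.exp_one_lt_d9]

theorem natLog_add_two_le {n : ℕ} (hn : 4 ≤ n) :
    ((Nat.log 2 n + 1 : ℕ) : ℝ) + 1 ≤ 3 * Real.log n := by
  have hL : 2 ≤ Nat.log 2 n := Nat.le_log_of_pow_le (by norm_num) (by simpa using hn)
  have hL' : (2 : ℝ) ≤ Nat.log 2 n := by exact_mod_cast hL
  have hpow : ((2 : ℝ) ^ Nat.log 2 n) ≤ n := by exact_mod_cast Nat.pow_log_le_self 2 (by omega)
  have h := Real.log_le_log (by positivity) hpow
  rw [Real.log_pow] at h
  push_cast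
  nlinarith [Real.log_two_gt_d9]

/-- **Theorem 3 (adaptive oracle risk bound).** There is a universal constant `C > 0`
such that for all `n1, n2 > 1`, `σ > 0` and all isotonic `θ*`, the least squares
estimator satisfies, for every isotonic `θ`,
`R(θ*, θ̂) ≤ ‖θ* − θ‖²/n + C k(θ) σ² (log n)⁸ / n` with `n = n1 n2`
(equivalently, `R(θ*, θ̂)` is at most the infimum over `θ ∈ M` of the right-hand
side). -/
theorem isotonic_lse_adaptive_risk :
    ∃ C : ℝ, 0 < C ∧
      ∀ (n1 n2 : ℕ), 1 < n1 → 1 < n2 → ∀ σ : ℝ, 0 < σ →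
        ∀ θstar : Fin n1 → Fin n2 → ℝ, Isotonic θstar →
          ∀ lse, IsLSE lse →
            ∀ θ : Fin n1 → Fin n2 → ℝ, Isotonic θ →
              risk σ θstar lse ≤
                frobSq (θstar - θ) / (n1 * n2) +
                  C * kRect θ * σ ^ 2 * Real.log (n1 * n2) ^ 8 / (n1 * n2) := by
  refine ⟨15552, by norm_num, ?_⟩
  intro n1 n2 h1 h2 σ hσ θstar _ lse hlse θ hθ
  obtain ⟨P, hP, hθP, hcard⟩ := exists_isRectPartition_card_eq_kRect θ
  have hn : 4 ≤ n1 * n2 := four_le_mul h1 h2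
  set K := Nat.log 2 (n1 * n2) + 1 with hKdef
  have hK : n1 ≤ 2 ^ K := (Nat.le_mul_of_pos_right n1 (by omega)).trans
    (Nat.lt_pow_succ_log_self (by norm_num) _).le
  set H := ∑ i ∈ Finset.range (n1 * n2), (((i + 1 : ℕ) : ℝ))⁻¹ with hHdef
  set L := Real.log (n1 * n2) with hLdef
  have hLcast : Real.log ((n1 * n2 : ℕ) : ℝ) = L := by rw [Nat.cast_mul]
  have hL1 : 1 ≤ L := hLcast ▸ one_le_log_of_four_le hn
  have hH0 : 0 ≤ H := Finset.sum_nonneg fun i _ => by positivity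
  have hH : H ≤ 2 * L := by
    have h := harmonic_le_one_add_log (n1 * n2)
    simp only [harmonic, Rat.cast_sum, Rat.cast_inv, Rat.cast_natCast] at h
    rw [hLcast] at h
    linarith
  have hK4 : ((K : ℝ) + 1) ^ 4 ≤ (3 * L) ^ 4 := by
    have := natLog_add_two_le hn
    rw [hLcast] at this
    gcongr
  set D : ℝ := P.card * (2 * ((K + 1) ^ 4 * H)) with hD
  have hpoint : ∀ ε : Fin n1 → Fin n2 → ℝ, frobSq (lse (θstar + ε) - θstar) ≤
      frobSq (θstar - θ) + D * noiseBound σ ε := by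
    intro ε
    refine (hlse.frobSq_sub_le_of_hasRectBound θstar hθ hP hθP (hasRectBound_natExt hσ ε)
      (Real.sqrt_nonneg _) hK).trans (le_of_eq ?_)
    rw [Real.sq_sqrt (noiseBound_nonneg σ ε)]
    ring
  have hint : ∫ ε, frobSq (lse (θstar + ε) - θstar) ∂noiseMeasure n1 n2 σ ≤
      frobSq (θstar - θ) + D * ∫ ε, noiseBound σ ε ∂noiseMeasure n1 n2 σ := by
    refine (integral_mono_of_nonneg (Filter.Eventually.of_forall fun ε =>
      Finset.sum_nonneg fun i _ => Finset.sum_nonneg fun j _ => sq_nonneg _)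
      ((integrable_const _).add ((integrable_noiseBound σ).const_mul D))
      (Filter.Eventually.of_forall hpoint)).trans (le_of_eq ?_)
    rw [integral_add' (integrable_const _) ((integrable_noiseBound σ).const_mul D),
      integral_const_mul]
    simp
  have hnoise : ∫ ε, noiseBound (n1 := n1) (n2 := n2) σ ε ∂noiseMeasure n1 n2 σ ≤
      σ ^ 2 * (48 * L ^ 2) := by
    refine (integral_noiseBound_le hσ).trans (mul_le_mul_of_nonneg_left ?_ (sq_nonneg σ))
    have hlog := log_card_rectIndex_le h1 h2
    have hlog0 := Real.log_nonneg (one_le_card_rectIndex n1 n2)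
    nlinarith
  have hDle : D ≤ kRect θ * (2 * ((3 * L) ^ 4 * (2 * L))) := by
    rw [hD, hcard]
    gcongr
  have hfin : D * ∫ ε, noiseBound (n1 := n1) (n2 := n2) σ ε ∂noiseMeasure n1 n2 σ ≤
      15552 * kRect θ * σ ^ 2 * L ^ 8 := by
    calc _ ≤ D * (σ ^ 2 * (48 * L ^ 2)) :=
          mul_le_mul_of_nonneg_left hnoise (by positivity)
      _ ≤ (kRect θ * (2 * ((3 * L) ^ 4 * (2 * L)))) * (σ ^ 2 * (48 * L ^ 2)) :=
          mul_le_mul_of_nonneg_right hDle (by positivity)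
      _ = 15552 * kRect θ * σ ^ 2 * L ^ 7 := by ring
      _ ≤ 15552 * kRect θ * σ ^ 2 * L ^ 8 := by
          gcongr
          norm_num
  rw [risk, ← add_div]
  exact div_le_div_of_nonneg_right (hint.trans (add_le_add_right hfin _)) (by positivity)
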